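/- Let Y be a Banach space, (x_n)_{n∈ℕ} a bounded sequence in Y, and L ∈ Y. Let V : ℕ → (0,∞) be strictly increasing with lim_{N→∞} V(N) = ∞ and lim_{N→∞} ΔV(N)/V(N) = 0. If 𝔼^{log V}_unif x_n = L, then 𝔼(∞)^V x_n = L. -/

import Mathlib

open Filter Finset MeasureTheory

/-- Discrete derivative: `Δg(n) = g(n) - g(n-1)` for `n ≥ 2`, and `Δg(1) = g(1)`. -/
noncomputable def dd (g : ℕ → ℝ) (n : ℕ) : ℝ := if n = 1 then g 1 else g n - g (n - 1)

/-- Iterated discrete derivative `Δ^k`. -/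
noncomputable def ddIter (f : ℕ → ℝ) : ℕ → ℕ → ℝ
  | 0 => f
  | k + 1 => dd (ddIter f k)

/-- `N`-th `W`-weighted average `𝔼^W_{n ≤ N} x_n`. -/
noncomputable def wavg {Y : Type*} [AddCommGroup Y] [Module ℝ Y]
    (W : ℕ → ℝ) (x : ℕ → Y) (N : ℕ) : Y :=
  (W N)⁻¹ • ∑ n ∈ Finset.Icc 1 N, dd W n • x n

/-- `W`-weighted average over the interval `[M, N]`. -/
noncomputable def wavgI {Y : Type*} [AddCommGroup Y] [Module ℝ Y]
    (W : ℕ → ℝ) (x : ℕ → Y) (M N : ℕ) : Y :=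
  (W N - W M)⁻¹ • ∑ n ∈ Finset.Icc M N, dd W n • x n

/-- Cesàro average over the interval `[M, N]`. -/
noncomputable def cesaroI {Y : Type*} [AddCommGroup Y] [Module ℝ Y]
    (x : ℕ → Y) (M N : ℕ) : Y :=
  ((N : ℝ) - (M : ℝ))⁻¹ • ∑ n ∈ Finset.Icc M N, x n

/-- Iterated `W`-weighted averages: `iterAvg W x k N = 𝔼(k)^W_{n ≤ N} x_n`,
with the convention `iterAvg W x 0 = x`. -/
noncomputable def iterAvg {Y : Type*} [AddCommGroup Y] [Module ℝ Y]
    (W : ℕ → ℝ) (x : ℕ → Y) : ℕ → ℕ → Y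
  | 0, N => x N
  | k + 1, N => (W N)⁻¹ • ∑ n ∈ Finset.Icc 1 N, dd W n • iterAvg W x k n

/-- The uniform `W`-weighted average of `x` equals `L`: `𝔼^W_unif x_n = L`. -/
def unifAvg {Y : Type*} [NormedAddCommGroup Y] [NormedSpace ℝ Y]
    (W : ℕ → ℝ) (x : ℕ → Y) (L : Y) : Prop :=
  ∀ ε > (0 : ℝ), ∃ K > (0 : ℝ), ∀ M N : ℕ, 1 ≤ M → M ≤ N → K ≤ W N - W M →
    ‖wavgI W x M N - L‖ < ε

/-- `𝔼(∞)^W x_n = L`: `lim_{k → ∞} limsup_{N → ∞} ‖𝔼(k)^W_{n ≤ N}(x_n - L)‖ = 0`. -/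
def iterInfty {Y : Type*} [NormedAddCommGroup Y] [NormedSpace ℝ Y]
    (W : ℕ → ℝ) (x : ℕ → Y) (L : Y) : Prop :=
  Tendsto (fun k => Filter.limsup (fun N => ‖iterAvg W (fun n => x n - L) (k + 1) N‖) atTop)
    atTop (nhds 0)

/-- Membership in the class `𝓕₁`. -/
def inF1 (f : ℕ → ℝ) : Prop :=
  Tendsto f atTop atTop ∧ Tendsto (fun n => dd f n) atTop (nhds 0) ∧
    ∃ n₀ : ℕ, ∀ m n : ℕ, n₀ ≤ m → m ≤ n → dd f n ≤ dd f m

/-- `memF ℓ f` means `f ∈ 𝓕_{ℓ+1}`. -/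
def memF : ℕ → (ℕ → ℝ) → Prop
  | 0, f => inF1 f
  | ℓ + 1, f => memF ℓ (dd f)

/-- Integer powers `T^m` of an invertible map `T` with inverse `e`. -/
def zpowIter {X : Type*} (T e : X → X) (m : ℤ) : X → X :=
  if 0 ≤ m then T^[m.toNat] else e^[(-m).toNat]

/-- `p(Δ)f(n)` for an integer polynomial `p`. -/
noncomputable def polyDD (p : Polynomial ℤ) (f : ℕ → ℝ) (n : ℕ) : ℝ :=
  ∑ j ∈ Finset.range (p.natDegree + 1), (p.coeff j : ℝ) * ddIter f j n

/-- `E ⊆ ℕ = {1, 2, ...}` has positive upper Banach density. -/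
def posUBD (E : Set ℕ) : Prop :=
  ∃ δ : ℝ, 0 < δ ∧ ∃ M N : ℕ → ℕ, (∀ j, 1 ≤ M j ∧ M j ≤ N j) ∧
    Tendsto (fun j => N j - M j) atTop atTop ∧
    ∀ j, δ * ((N j : ℝ) - (M j : ℝ)) ≤ (Nat.card ↥(E ∩ Set.Icc (M j) (N j)) : ℝ)

/-!
Averaging `A f = 𝔼^V f` is the resolvent of an accretive operator: comparing `A f` with the
midpoint of `f` and `A f` gives `2 ‖A f‖ ≤ ‖f + A f‖`. Hence `A ^ k` is dominated by
`((1 + A) / 2) ^ k`, whose binomial coefficients vary slowly, so that `A ^ k (1 - A)` has norm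
`O(1 / √k)`. It remains to write `x - L`, up to a small and a null sequence, as some `g` with
`A g = (1 - A) w` and `w` bounded. Such a `w` is a primitive of `x - L` in the time scale `log V`,
damped by a small leak so that the hypothesis on long windows keeps it bounded.
-/

open scoped BoundedContinuousFunction Topology

section Binomial

open Polynomial in
lemma add_one_smul_one_add_pow_mul_one_sub {R A : Type*} [CommRing R] [Ring A] [Algebra R A]
    (a : A) (k : ℕ) :
    ((k : R) + 1) • ((1 + a) ^ k * (1 - a)) =
      ∑ j ∈ range (k + 2), (((k + 1).choose j : R) * ((k : R) + 1 - 2 * j)) • a ^ j := by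
  have binomial : (1 + X : R[X]) ^ (k + 1) =
      ∑ j ∈ range (k + 2), ((k + 1).choose j : R[X]) * X ^ j := by
    simp [add_comm (1 : R[X]), add_pow, mul_comm]
  have binomial_deriv : ((k : R[X]) + 1) * (1 + X) ^ k * X =
      ∑ j ∈ range (k + 2), ((k + 1).choose j : R[X]) * (j : R[X]) * X ^ j := by
    have h := congrArg (fun p => derivative p * X) binomial
    simp only [derivative_pow, derivative_add, derivative_one, derivative_X, zero_add, mul_one,
      add_tsub_cancel_right, derivative_sum, derivative_natCast_mul, map_natCast, C_add, C_1,
      Finset.sum_mul, Nat.cast_add, Nat.cast_one] at h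
    rw [h]
    refine sum_congr rfl fun j _ => ?_
    cases j <;> simp [pow_succ, mul_assoc]
  have key : ((k : R[X]) + 1) * ((1 + X) ^ k * (1 - X)) =
      ∑ j ∈ range (k + 2),
        (((k + 1).choose j : R[X]) * ((k : R[X]) + 1 - 2 * (j : R[X]))) * X ^ j := by
    calc ((k : R[X]) + 1) * ((1 + X) ^ k * (1 - X))
        = ((k : R[X]) + 1) * (1 + X) ^ (k + 1) - 2 * (((k : R[X]) + 1) * (1 + X) ^ k * X) := by
          ring
      _ = _ := by
        rw [binomial, binomial_deriv, mul_sum, mul_sum, ← sum_sub_distrib]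
        exact sum_congr rfl fun j _ => by ring
  simpa [Algebra.smul_def, map_ofNat] using congrArg (aeval a) key

lemma sum_choose_mul_sub_two_mul_sq (n : ℕ) :
    ∑ j ∈ range (n + 1), (n.choose j : ℝ) * ((n : ℝ) - 2 * j) ^ 2 = (2 : ℝ) ^ n * (n : ℝ) := by
  have variance := congrArg (Polynomial.eval (1 / 2 : ℝ)) (bernsteinPolynomial.variance ℝ n)
  simp only [Polynomial.eval_finsetSum, bernsteinPolynomial, Polynomial.eval_mul,
    Polynomial.eval_pow, Polynomial.eval_sub, Polynomial.eval_natCast, Polynomial.eval_X,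
    Polynomial.eval_one, nsmul_eq_mul] at variance
  have scale : ∀ j ∈ range (n + 1), (n.choose j : ℝ) * ((n : ℝ) - 2 * j) ^ 2 =
      4 * 2 ^ n *
        (((n : ℝ) * (1 / 2) - j) ^ 2 * (n.choose j * (1 / 2) ^ j * (1 - 1 / 2) ^ (n - j))) := by
    intro j hj
    have half_pow : (1 / 2 : ℝ) ^ j * (1 - 1 / 2) ^ (n - j) = (2 ^ n)⁻¹ := by
      rw [sub_half, ← pow_add, Nat.add_sub_cancel' (mem_range_succ_iff.1 hj), one_div, inv_pow]
    rw [mul_assoc (n.choose j : ℝ), half_pow]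
    field_simp
    ring
  rw [sum_congr rfl scale, ← mul_sum, variance]
  ring

lemma sum_choose_mul_abs_sub_two_mul_le (n : ℕ) :
    ∑ j ∈ range (n + 1), (n.choose j : ℝ) * |(n : ℝ) - 2 * j| ≤ (2 : ℝ) ^ n * √(n : ℝ) := by
  have cauchy_schwarz : (∑ j ∈ range (n + 1), (n.choose j : ℝ) * |(n : ℝ) - 2 * j|) ^ 2 ≤
      (∑ j ∈ range (n + 1), (n.choose j : ℝ)) *
        ∑ j ∈ range (n + 1), (n.choose j : ℝ) * ((n : ℝ) - 2 * j) ^ 2 :=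
    sum_sq_le_sum_mul_sum_of_sq_le_mul _ (fun _ _ => by positivity) (fun _ _ => by positivity)
      fun j _ => le_of_eq <| by rw [mul_pow, sq_abs]; ring
  have total : ∑ j ∈ range (n + 1), (n.choose j : ℝ) = 2 ^ n := by
    exact_mod_cast Nat.sum_range_choose n
  rw [total, sum_choose_mul_sub_two_mul_sq] at cauchy_schwarz
  refine le_of_sq_le_sq (cauchy_schwarz.trans_eq ?_) (by positivity)
  rw [mul_pow, Real.sq_sqrt n.cast_nonneg]
  ring

end Binomial

section MidpointContraction

variable {E : Type*} [SeminormedAddCommGroup E] [NormedSpace ℝ E] {A : Module.End ℝ E}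

/-- `A f` is never longer than the midpoint of `f` and `A f`. Resolvents of accretive operators
have this property, and it forces `A ^ k (1 - A)` to decay. -/
def IsMidpointContraction (A : Module.End ℝ E) : Prop :=
  ∀ f, 2 * ‖A f‖ ≤ ‖f + A f‖

namespace IsMidpointContraction

lemma norm_pow_apply_le (hA : IsMidpointContraction A) (k : ℕ) (f : E) :
    ‖(A ^ k) f‖ ≤ ‖f‖ := by
  induction k with
  | zero => simp
  | succ k ih =>
    rw [pow_succ', Module.End.mul_apply]
    linarith [hA ((A ^ k) f), norm_add_le ((A ^ k) f) (A ((A ^ k) f))]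

lemma two_pow_mul_norm_pow_apply_le (hA : IsMidpointContraction A) (k : ℕ) (f : E) :
    2 ^ k * ‖(A ^ k) f‖ ≤ ‖((1 + A) ^ k) f‖ := by
  induction k generalizing f with
  | zero => simp
  | succ k ih =>
    have commute : (A ^ k) f + A ((A ^ k) f) = (A ^ k) ((1 + A) f) := by
      rw [← Module.End.mul_apply, ← pow_succ', pow_succ]
      simp
    calc 2 ^ (k + 1) * ‖(A ^ (k + 1)) f‖ = 2 ^ k * (2 * ‖A ((A ^ k) f)‖) := by
          rw [pow_succ' A, Module.End.mul_apply]; ring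
      _ ≤ 2 ^ k * ‖(A ^ k) f + A ((A ^ k) f)‖ := by gcongr; exact hA _
      _ = 2 ^ k * ‖(A ^ k) ((1 + A) f)‖ := by rw [commute]
      _ ≤ ‖((1 + A) ^ (k + 1)) f‖ := by
          rw [pow_succ (1 + A), Module.End.mul_apply]; exact ih _

lemma norm_one_add_pow_apply_sub_le (hA : IsMidpointContraction A) (k : ℕ) (f : E) :
    (k + 1) * ‖((1 + A) ^ k) (f - A f)‖ ≤ 2 ^ (k + 1) * √(k + 1) * ‖f‖ := by
  have expand : ((k : ℝ) + 1) • ((1 + A) ^ k) (f - A f) =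
      ∑ j ∈ range (k + 2), (((k + 1).choose j : ℝ) * ((k : ℝ) + 1 - 2 * j)) • (A ^ j) f := by
    simpa using congrArg (fun T : Module.End ℝ E => T f)
      (add_one_smul_one_add_pow_mul_one_sub (R := ℝ) A k)
  have coeff_le := sum_choose_mul_abs_sub_two_mul_le (k + 1)
  push_cast at coeff_le
  calc (k + 1) * ‖((1 + A) ^ k) (f - A f)‖ = ‖((k : ℝ) + 1) • ((1 + A) ^ k) (f - A f)‖ := by
        rw [norm_smul, Real.norm_of_nonneg (by positivity)]
    _ ≤ ∑ j ∈ range (k + 2), (k + 1).choose j * |(k : ℝ) + 1 - 2 * j| * ‖f‖ := by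
        rw [expand]
        refine norm_sum_le_of_le _ fun j _ => ?_
        rw [norm_smul, norm_mul, Real.norm_natCast, Real.norm_eq_abs]
        gcongr
        exact hA.norm_pow_apply_le j f
    _ ≤ 2 ^ (k + 1) * √(k + 1) * ‖f‖ := by
        rw [← sum_mul]
        gcongr

theorem norm_pow_apply_sub_le (hA : IsMidpointContraction A) (k : ℕ) (f : E) :
    ‖(A ^ k) (f - A f)‖ ≤ 2 * ‖f‖ / √(k + 1) := by
  have hs : 0 < √((k : ℝ) + 1) := by positivity
  have hss : √((k : ℝ) + 1) * √(k + 1) = k + 1 := Real.mul_self_sqrt (by positivity)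
  rw [le_div_iff₀ hs]
  refine le_of_mul_le_mul_left ?_ (by positivity : 0 < 2 ^ k * √((k : ℝ) + 1))
  calc 2 ^ k * √(k + 1) * (‖(A ^ k) (f - A f)‖ * √(k + 1))
      = (k + 1) * (2 ^ k * ‖(A ^ k) (f - A f)‖) := by
        linear_combination 2 ^ k * ‖(A ^ k) (f - A f)‖ * hss
    _ ≤ (k + 1) * ‖((1 + A) ^ k) (f - A f)‖ := by
        gcongr
        exact hA.two_pow_mul_norm_pow_apply_le k _
    _ ≤ 2 ^ (k + 1) * √(k + 1) * ‖f‖ := hA.norm_one_add_pow_apply_sub_le k f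
    _ = 2 ^ k * √(k + 1) * (2 * ‖f‖) := by ring

end IsMidpointContraction

end MidpointContraction

lemma norm_le_of_smul_eq_smul_add_smul {E : Type*} [SeminormedAddCommGroup E] [NormedSpace ℝ E]
    {s α β p q c : ℝ} {z u v : E} (hs : 0 < s) (hα : 0 ≤ α) (hβ : 0 ≤ β)
    (h : s • z = α • u + β • v) (hu : ‖u‖ ≤ p) (hv : ‖v‖ ≤ q) (hc : α * p + β * q ≤ s * c) :
    ‖z‖ ≤ c := by
  refine le_of_mul_le_mul_left ?_ hs
  calc s * ‖z‖ = ‖α • u + β • v‖ := by rw [← h, norm_smul, Real.norm_of_nonneg hs.le]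
    _ ≤ α * ‖u‖ + β * ‖v‖ := by
        refine (norm_add_le _ _).trans_eq ?_
        rw [norm_smul, norm_smul, Real.norm_of_nonneg hα, Real.norm_of_nonneg hβ]
    _ ≤ α * p + β * q := by gcongr
    _ ≤ s * c := hc

section Sums

lemma dd_one (g : ℕ → ℝ) : dd g 1 = g 1 := by simp [dd]

lemma dd_add_two (g : ℕ → ℝ) (n : ℕ) : dd g (n + 2) = g (n + 2) - g (n + 1) := by simp [dd]

lemma sum_Ico_dd_add_two (W : ℕ → ℝ) {M N : ℕ} (h : M ≤ N) :
    ∑ n ∈ Ico M N, dd W (n + 2) = W (N + 1) - W (M + 1) := by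
  simp only [dd_add_two]
  exact sum_Ico_sub (fun n => W (n + 1)) h

lemma sum_Icc_one_dd (W : ℕ → ℝ) (N : ℕ) : ∑ n ∈ Icc 1 (N + 1), dd W n = W (N + 1) := by
  induction N with
  | zero => simp [dd_one]
  | succ N ih => rw [sum_Icc_succ_top (by lia), ih, dd_add_two]; ring

lemma sum_range_add_one_eq_sum_Icc {E : Type*} [AddCommMonoid E] (f : ℕ → E) (N : ℕ) :
    ∑ n ∈ range N, f (n + 1) = ∑ n ∈ Icc 1 N, f n := by
  rw [range_eq_Ico, sum_Ico_add' f 0 N 1]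
  rfl

lemma sum_Icc_add_one_eq_add_sum_Ico {E : Type*} [AddCommMonoid E] (f : ℕ → E) {M N : ℕ}
    (h : M ≤ N) :
    ∑ n ∈ Icc (M + 1) (N + 1), f n = f (M + 1) + ∑ n ∈ Ico M N, f (n + 2) := by
  rw [← Ico_add_one_right_eq_Icc, sum_eq_sum_Ico_succ_bot (by lia), sum_Ico_add' f M N 2]
  rfl

end Sums

/-- A weight on the positive integers: positive and nondecreasing there. The value at `0` is
unconstrained, since sequences are indexed from `1`. -/
structure IsWeight (V : ℕ → ℝ) : Prop where
  pos : ∀ n, 1 ≤ n → 0 < V n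
  monotoneOn : MonotoneOn V (Set.Ici 1)

lemma dd_add_two_nonneg {W : ℕ → ℝ} (hW : MonotoneOn W (Set.Ici 1)) (n : ℕ) :
    0 ≤ dd W (n + 2) := by
  rw [dd_add_two, sub_nonneg]
  exact hW (Set.mem_Ici.2 (by lia)) (Set.mem_Ici.2 (by lia)) (by lia)

namespace IsWeight

variable {V : ℕ → ℝ}

lemma dd_nonneg (hV : IsWeight V) {n : ℕ} (hn : 1 ≤ n) : 0 ≤ dd V n := by
  obtain _ | _ | n := n
  · lia
  · exact (hV.pos 1 le_rfl).le.trans_eq (dd_one V).symm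
  · exact dd_add_two_nonneg hV.monotoneOn n

lemma monotoneOn_log (hV : IsWeight V) : MonotoneOn (fun n => Real.log (V n)) (Set.Ici 1) :=
  fun m hm _ hn hmn => Real.log_le_log (hV.pos m hm) (hV.monotoneOn hm hn hmn)

lemma tendsto_dd_log (hV : IsWeight V) (hV0 : Tendsto (fun n => dd V n / V n) atTop (𝓝 0)) :
    Tendsto (dd fun n => Real.log (V n)) atTop (𝓝 0) := by
  have hlog : Tendsto (fun n => -Real.log (1 - dd V n / V n)) atTop (𝓝 0) := by
    have h1 : Tendsto (fun n => 1 - dd V n / V n) atTop (𝓝 1) := by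
      simpa using hV0.const_sub 1
    simpa using (h1.log one_ne_zero).neg
  refine hlog.congr' ?_
  filter_upwards [eventually_ge_atTop 2] with m hm
  obtain ⟨n, rfl⟩ := Nat.exists_eq_add_of_le' hm
  have hpos₁ := hV.pos (n + 1) (by lia)
  have hpos₂ := hV.pos (n + 2) (by lia)
  have ratio : 1 - dd V (n + 2) / V (n + 2) = V (n + 1) / V (n + 2) := by
    rw [dd_add_two]
    field_simp
    ring
  rw [ratio, dd_add_two, Real.log_div hpos₁.ne' hpos₂.ne', neg_sub]

end IsWeight

section WeightedAverage

variable {V : ℕ → ℝ}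

lemma wavg_zero {Y : Type*} [AddCommGroup Y] [Module ℝ Y] (V : ℕ → ℝ) (f : ℕ → Y) :
    wavg V f 0 = 0 := by
  simp [wavg]

lemma IsWeight.wavg_one {Y : Type*} [AddCommGroup Y] [Module ℝ Y] (hV : IsWeight V)
    (f : ℕ → Y) : wavg V f 1 = f 1 := by
  simp [wavg, dd_one, inv_smul_smul₀ (hV.pos 1 le_rfl).ne']

lemma IsWeight.smul_wavg_add_two {Y : Type*} [AddCommGroup Y] [Module ℝ Y] (hV : IsWeight V)
    (f : ℕ → Y) (n : ℕ) :
    V (n + 2) • wavg V f (n + 2) = V (n + 1) • wavg V f (n + 1) + dd V (n + 2) • f (n + 2) := by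
  rw [wavg, wavg, smul_inv_smul₀ (hV.pos _ (by lia)).ne', smul_inv_smul₀ (hV.pos _ (by lia)).ne',
    sum_Icc_succ_top (by lia)]

lemma IsWeight.wavg_eq_of_recursion {Y : Type*} [AddCommGroup Y] [Module ℝ Y] (hV : IsWeight V)
    {f w : ℕ → Y} (h0 : w 0 = 0) (h1 : w 1 = f 1)
    (h : ∀ n, V (n + 2) • w (n + 2) = V (n + 1) • w (n + 1) + dd V (n + 2) • f (n + 2)) :
    wavg V f = w := by
  funext n
  induction n using Nat.twoStepInduction with
  | zero => rw [wavg_zero, h0]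
  | one => rw [hV.wavg_one, h1]
  | more n _ ih =>
    refine smul_right_injective Y (hV.pos (n + 2) (by lia)).ne' ?_
    change V (n + 2) • wavg V f (n + 2) = V (n + 2) • w (n + 2)
    rw [hV.smul_wavg_add_two, ih, h]

variable {Y : Type*} [SeminormedAddCommGroup Y] [NormedSpace ℝ Y]

lemma IsWeight.norm_wavg_le (hV : IsWeight V) {f : ℕ → Y} {c : ℝ} (hf : ∀ n, ‖f n‖ ≤ c) (N : ℕ) :
    ‖wavg V f N‖ ≤ c := by
  obtain _ | N := N
  · simpa [wavg_zero] using (norm_nonneg _).trans (hf 0)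
  have hpos := hV.pos (N + 1) (by lia)
  rw [wavg, norm_smul, norm_inv, Real.norm_of_nonneg hpos.le, inv_mul_le_iff₀ hpos,
    ← sum_Icc_one_dd V N, sum_mul]
  refine norm_sum_le_of_le _ fun n hn => ?_
  have hdd := hV.dd_nonneg (mem_Icc.1 hn).1
  rw [norm_smul, Real.norm_of_nonneg hdd]
  gcongr
  exact hf n

lemma IsWeight.two_mul_norm_wavg_le (hV : IsWeight V) {f : ℕ → Y} {c : ℝ}
    (hf : ∀ n, ‖f n + wavg V f n‖ ≤ c) (n : ℕ) : 2 * ‖wavg V f n‖ ≤ c := by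
  have hc : 0 ≤ c := (norm_nonneg _).trans (hf 0)
  rw [← le_div_iff₀' two_pos]
  induction n using Nat.twoStepInduction with
  | zero => rw [wavg_zero, norm_zero]; positivity
  | one =>
    have h := hf 1
    rw [hV.wavg_one, ← two_smul ℝ, norm_smul, Real.norm_two] at h
    rwa [hV.wavg_one, le_div_iff₀' two_pos]
  | more n _ ih =>
    have hdd := dd_add_two_nonneg hV.monotoneOn n
    have midpoint : (V (n + 2) + dd V (n + 2)) • wavg V f (n + 2) =
        V (n + 1) • wavg V f (n + 1) + dd V (n + 2) • (f (n + 2) + wavg V f (n + 2)) := by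
      rw [add_smul, hV.smul_wavg_add_two]
      module
    refine norm_le_of_smul_eq_smul_add_smul (add_pos_of_pos_of_nonneg (hV.pos _ (by lia)) hdd)
      (hV.pos _ (by lia)).le hdd midpoint ih (hf _) (le_of_eq ?_)
    rw [dd_add_two]
    ring

lemma IsWeight.tendsto_wavg_zero {Y : Type*} [NormedAddCommGroup Y] [NormedSpace ℝ Y]
    (hV : IsWeight V) (hVtop : Tendsto V atTop atTop) {f : ℕ → Y}
    (hf : Tendsto f atTop (𝓝 0)) : Tendsto (wavg V f) atTop (𝓝 0) := by
  have sum_weights : (fun N => ∑ n ∈ range N, dd V (n + 1)) =ᶠ[atTop] V := by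
    filter_upwards [eventually_ge_atTop 1] with N hN
    obtain ⟨N, rfl⟩ := Nat.exists_eq_add_of_le' hN
    rw [sum_range_add_one_eq_sum_Icc, sum_Icc_one_dd]
  have littleO : (fun n => dd V (n + 1) • f (n + 1)) =o[atTop] fun n => dd V (n + 1) := by
    simpa using (Asymptotics.isBigO_refl (fun n => dd V (n + 1)) atTop).smul_isLittleO
      ((Asymptotics.isLittleO_one_iff ℝ).2 (hf.comp (tendsto_add_atTop_nat 1)))
  have sum_littleO := (littleO.sum_range (fun n => hV.dd_nonneg (by lia))
    (hVtop.congr' sum_weights.symm)).trans_eventuallyEq sum_weights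
  simp only [sum_range_add_one_eq_sum_Icc (fun n => dd V n • f n)] at sum_littleO
  exact sum_littleO.tendsto_inv_smul_nhds_zero

/-- The averaging operator `f ↦ 𝔼^V f` on bounded sequences. Bounded sequences are encoded as
bounded continuous functions on the discrete space `ℕ`, which carry the sup norm. -/
noncomputable def avgOp (hV : IsWeight V) : Module.End ℝ (ℕ →ᵇ Y) where
  toFun f := .ofNormedAddCommGroupDiscrete (wavg V f) ‖f‖ (hV.norm_wavg_le f.norm_coe_le_norm)
  map_add' f g := by
    ext N
    simp [wavg, sum_add_distrib]
  map_smul' c f := by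
    ext N
    simp [wavg, smul_sum, smul_comm c]

lemma coe_avgOp (hV : IsWeight V) (f : ℕ →ᵇ Y) : ⇑(avgOp hV f) = wavg V f := rfl

lemma coe_avgOp_pow (hV : IsWeight V) (f : ℕ →ᵇ Y) (k : ℕ) :
    ⇑((avgOp hV ^ k) f) = iterAvg V f k := by
  induction k with
  | zero => rfl
  | succ k ih =>
    rw [pow_succ', Module.End.mul_apply, coe_avgOp, ih]
    rfl

lemma isMidpointContraction_avgOp (hV : IsWeight V) :
    IsMidpointContraction (avgOp (Y := Y) hV) := by
  intro f
  rw [← le_div_iff₀' two_pos, BoundedContinuousFunction.norm_le (by positivity)]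
  intro n
  rw [le_div_iff₀' two_pos]
  exact hV.two_mul_norm_wavg_le (f + avgOp hV f).norm_coe_le_norm n

lemma tendsto_avgOp_pow_zero {Y : Type*} [NormedAddCommGroup Y] [NormedSpace ℝ Y]
    (hV : IsWeight V) (hVtop : Tendsto V atTop atTop) {f : ℕ →ᵇ Y}
    (hf : Tendsto f atTop (𝓝 0)) (k : ℕ) : Tendsto ((avgOp hV ^ k) f) atTop (𝓝 0) := by
  induction k with
  | zero => exact hf
  | succ k ih =>
    rw [pow_succ', Module.End.mul_apply]
    exact hV.tendsto_wavg_zero hVtop ih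

lemma avgOp_eq_sub_avgOp (hV : IsWeight V) {g w : ℕ →ᵇ Y} (hw : w 0 = 0) (hg : g 1 = 0)
    (h : ∀ n, V (n + 1) • (w (n + 2) - w (n + 1)) = dd V (n + 2) • g (n + 2)) :
    avgOp hV g = w - avgOp hV w := by
  rw [eq_sub_iff_add_eq, ← map_add]
  refine DFunLike.coe_injective (hV.wavg_eq_of_recursion hw (by simp [hg]) fun n => ?_)
  rw [BoundedContinuousFunction.add_apply, smul_add, ← h, dd_add_two]
  module

end WeightedAverage

section LeakySum

/-- The partial sums of `a n • y n` with leak rate `δ`: the implicit Euler scheme with steps `a n`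
for `w' = y - δ w`. For `δ > 0` it stays bounded whenever the averages of `y` over long windows are
small, which the partial sums themselves need not do. -/
noncomputable def leakySum {Y : Type*} [AddCommGroup Y] [Module ℝ Y] (δ : ℝ) (a : ℕ → ℝ)
    (y : ℕ → Y) : ℕ → Y
  | 0 => 0
  | n + 1 => (1 + δ * a n)⁻¹ • (leakySum δ a y n + a n • y n)

variable {δ : ℝ} {a : ℕ → ℝ}

lemma smul_leakySum_succ {Y : Type*} [AddCommGroup Y] [Module ℝ Y] {y : ℕ → Y} {n : ℕ}
    (hn : 1 + δ * a n ≠ 0) :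
    (1 + δ * a n) • leakySum δ a y (n + 1) = leakySum δ a y n + a n • y n := by
  rw [leakySum, smul_inv_smul₀ hn]

lemma leakySum_succ_sub {Y : Type*} [AddCommGroup Y] [Module ℝ Y] {y : ℕ → Y} {n : ℕ}
    (hn : 1 + δ * a n ≠ 0) :
    leakySum δ a y (n + 1) - leakySum δ a y n = a n • (y n - δ • leakySum δ a y (n + 1)) := by
  rw [smul_sub, smul_smul, mul_comm, ← add_sub_cancel_left (leakySum δ a y n) (a n • y n),
    ← smul_leakySum_succ hn]
  module

variable {Y : Type*} [SeminormedAddCommGroup Y] [NormedSpace ℝ Y] {y : ℕ → Y}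

-- The offset `b` absorbs the last term of the sum, which makes the induction on `n` work.
lemma norm_add_leakySum_le (hδ : 0 < δ) {ε : ℝ} (hε : 0 ≤ ε) (ha : ∀ n, 0 ≤ a n) (n : ℕ) (b : Y)
    (c : ℝ) (h : ∀ m ≤ n, ‖b + ∑ i ∈ Ico m n, a i • y i‖ ≤ ε * ∑ i ∈ Ico m n, a i + c) :
    ‖b + leakySum δ a y n‖ ≤ c + ε / δ := by
  induction n generalizing b c with
  | zero =>
    have hb : ‖b‖ ≤ c := by simpa using h 0 le_rfl
    simpa [leakySum] using hb.trans (le_add_of_nonneg_right (by positivity : 0 ≤ ε / δ))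
  | succ n ih =>
    have han := ha n
    have hs : 0 < 1 + δ * a n := by positivity
    have hb : ‖b‖ ≤ c := by simpa using h (n + 1) le_rfl
    have prev : ‖b + a n • y n + leakySum δ a y n‖ ≤ c + ε * a n + ε / δ := by
      refine ih _ _ fun m hm => ?_
      have hm' := h m (by lia)
      rw [sum_Ico_succ_top hm, sum_Ico_succ_top hm] at hm'
      convert hm' using 1
      · congr 1
        abel
      · ring
    have split : (1 + δ * a n) • (b + leakySum δ a y (n + 1)) =
        (1 : ℝ) • (b + a n • y n + leakySum δ a y n) + (δ * a n) • b := by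
      rw [smul_add, smul_leakySum_succ hs.ne']
      module
    refine norm_le_of_smul_eq_smul_add_smul hs zero_le_one (by positivity) split prev hb
      (le_of_eq ?_)
    field_simp
    ring

lemma norm_leakySum_le (hδ : 0 < δ) {ε c : ℝ} (hε : 0 ≤ ε) (ha : ∀ n, 0 ≤ a n)
    (h : ∀ m n, m ≤ n → ‖∑ i ∈ Ico m n, a i • y i‖ ≤ ε * ∑ i ∈ Ico m n, a i + c) (n : ℕ) :
    ‖leakySum δ a y n‖ ≤ c + ε / δ := by
  simpa using norm_add_leakySum_le (y := y) hδ hε ha n (0 : Y) c fun m hm => by simpa using h m n hm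

end LeakySum

section UniformAverage

variable {Y : Type*} [NormedAddCommGroup Y] [NormedSpace ℝ Y] {W : ℕ → ℝ} {L : Y}

lemma smul_wavgI_sub (x : ℕ → Y) (L : Y) {M N : ℕ} (hMN : M ≤ N) (hW : W (N + 1) - W (M + 1) ≠ 0) :
    (W (N + 1) - W (M + 1)) • (wavgI W x (M + 1) (N + 1) - L) =
      dd W (M + 1) • x (M + 1) + ∑ n ∈ Ico M N, dd W (n + 2) • (x (n + 2) - L) := by
  simp only [smul_sub, sum_sub_distrib]
  rw [wavgI, smul_inv_smul₀ hW, ← sum_smul, sum_Ico_dd_add_two W hMN,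
    sum_Icc_add_one_eq_add_sum_Ico (fun n => dd W n • x n) hMN]
  abel

lemma unifAvg.exists_norm_sum_le {x : ℕ →ᵇ Y} (h : unifAvg W x L)
    (hW : MonotoneOn W (Set.Ici 1)) {B : ℝ} (hB : ∀ n, ‖dd W n‖ ≤ B) {ε : ℝ} (hε : 0 < ε) :
    ∃ c, ∀ M N, M ≤ N → ‖∑ n ∈ Ico M N, dd W (n + 2) • (x (n + 2) - L)‖ ≤
      ε * ∑ n ∈ Ico M N, dd W (n + 2) + c := by
  obtain ⟨K, hK, hwindow⟩ := h ε hε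
  have hB0 : 0 ≤ B := (norm_nonneg _).trans (hB 0)
  set D := ‖x‖ + ‖L‖
  refine ⟨B * ‖x‖ + K * D, fun M N hMN => ?_⟩
  have length_nonneg : 0 ≤ ∑ n ∈ Ico M N, dd W (n + 2) :=
    sum_nonneg fun n _ => dd_add_two_nonneg hW n
  rw [sum_Ico_dd_add_two W hMN] at length_nonneg ⊢
  set T := W (N + 1) - W (M + 1) with hT
  obtain hlong | hshort := le_or_gt K T
  · have hTpos : 0 < T := hK.trans_le hlong
    have average := hwindow (M + 1) (N + 1) (by lia) (by lia) hlong
    calc ‖∑ n ∈ Ico M N, dd W (n + 2) • (x (n + 2) - L)‖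
        = ‖T • (wavgI W x (M + 1) (N + 1) - L) - dd W (M + 1) • x (M + 1)‖ := by
          rw [hT, smul_wavgI_sub x L hMN hTpos.ne', add_sub_cancel_left]
      _ ≤ T * ε + B * ‖x‖ := by
          refine norm_sub_le_of_le ?_ ?_ <;> rw [norm_smul]
          · rw [Real.norm_of_nonneg hTpos.le]
            gcongr
          · gcongr
            exacts [hB _, x.norm_coe_le_norm _]
      _ ≤ ε * T + (B * ‖x‖ + K * D) := by
          have : 0 ≤ K * D := by positivity
          linarith
  · calc ‖∑ n ∈ Ico M N, dd W (n + 2) • (x (n + 2) - L)‖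
        ≤ ∑ n ∈ Ico M N, dd W (n + 2) * D := by
          refine norm_sum_le_of_le _ fun n _ => ?_
          have hdd := dd_add_two_nonneg hW n
          rw [norm_smul, Real.norm_of_nonneg hdd]
          gcongr
          exact norm_sub_le_of_le (x.norm_coe_le_norm _) le_rfl
      _ = T * D := by rw [← sum_mul, sum_Ico_dd_add_two W hMN]
      _ ≤ ε * T + (B * ‖x‖ + K * D) := by
          have : T * D ≤ K * D := by gcongr
          have : 0 ≤ ε * T := by positivity
          have : 0 ≤ B * ‖x‖ := by positivity
          linarith

lemma unifAvg.exists_bounded_primitive {x : ℕ →ᵇ Y} (h : unifAvg W x L)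
    (hW : MonotoneOn W (Set.Ici 1)) {B : ℝ} (hB : ∀ n, ‖dd W n‖ ≤ B) {ε : ℝ} (hε : 0 < ε) :
    ∃ b w : ℕ →ᵇ Y, ‖b‖ ≤ ε ∧ w 0 = 0 ∧
      ∀ n, w (n + 2) - w (n + 1) = dd W (n + 2) • (x (n + 2) - L - b (n + 2)) := by
  obtain ⟨c, hc⟩ := h.exists_norm_sum_le hW hB (half_pos hε)
  have hc0 : 0 ≤ c := by simpa using hc 0 0 le_rfl
  have ha := dd_add_two_nonneg hW
  set δ := ε / 2 / (c + 1) with hδ_def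
  have hδ : 0 < δ := by positivity
  let w₀ : ℕ → Y := leakySum δ (fun n => dd W (n + 2)) (fun n => x (n + 2) - L)
  have hw₀ : ∀ n, ‖w₀ n‖ ≤ c + ε / 2 / δ := norm_leakySum_le hδ (by positivity) ha hc
  let w : ℕ →ᵇ Y :=
    .ofNormedAddCommGroupDiscrete (fun n => w₀ (n - 1)) (c + ε / 2 / δ) fun n => hw₀ (n - 1)
  refine ⟨δ • w, w, ?_, rfl, fun n => ?_⟩
  · have hw : ‖w‖ ≤ c + ε / 2 / δ :=
      (BoundedContinuousFunction.norm_le (by positivity)).2 fun n => hw₀ (n - 1)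
    calc ‖δ • w‖ ≤ δ * (c + ε / 2 / δ) := by
          rw [norm_smul, Real.norm_of_nonneg hδ.le]
          gcongr
      _ = δ * (c + 1) - δ + ε / 2 := by field_simp; ring
      _ ≤ ε := by
          have : δ * (c + 1) = ε / 2 := by rw [hδ_def]; field_simp
          linarith
  · have hs : 0 < 1 + δ * dd W (n + 2) := by have := ha n; positivity
    exact leakySum_succ_sub (a := fun n => dd W (n + 2)) (y := fun n => x (n + 2) - L) hs.ne'

end UniformAverage

section LogarithmicScale

lemma exists_mul_log_sub_log_eq {a b : ℝ} (ha : 0 < a) (hab : a ≤ b) :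
    ∃ ρ, 0 ≤ ρ ∧ ρ ≤ (b - a) / b ∧ a * (Real.log b - Real.log a) = (1 - ρ) * (b - a) := by
  obtain rfl | hlt := hab.eq_or_lt
  · exact ⟨0, by simp⟩
  have hb : 0 < b := ha.trans hlt
  have hd : 0 < b - a := sub_pos.2 hlt
  have lower : (b - a) / b ≤ Real.log b - Real.log a := by
    have := Real.one_sub_inv_le_log_of_pos (div_pos hb ha)
    rwa [inv_div, one_sub_div hb.ne', Real.log_div hb.ne' ha.ne'] at this
  have upper : Real.log b - Real.log a ≤ (b - a) / a := by
    have := Real.log_le_sub_one_of_pos (div_pos hb ha)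
    rwa [div_sub_one ha.ne', Real.log_div hb.ne' ha.ne'] at this
  refine ⟨1 - a * (Real.log b - Real.log a) / (b - a), ?_, ?_, by field_simp; ring⟩
  · rw [sub_nonneg, div_le_one hd, ← le_div_iff₀' ha]
    exact upper
  · rw [sub_le_comm, le_div_iff₀ hd]
    calc (1 - (b - a) / b) * (b - a) = a * ((b - a) / b) := by field_simp; ring
      _ ≤ a * (Real.log b - Real.log a) := by gcongr

variable {V : ℕ → ℝ}

lemma IsWeight.exists_log_defect (hV : IsWeight V)
    (hV0 : Tendsto (fun n => dd V n / V n) atTop (𝓝 0)) :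
    ∃ ρ : ℕ →ᵇ ℝ, Tendsto ρ atTop (𝓝 0) ∧ ρ 1 = 1 ∧
      ∀ n, V (n + 1) * dd (fun n => Real.log (V n)) (n + 2) = (1 - ρ (n + 2)) * dd V (n + 2) := by
  choose r hr_nonneg hr_le hr_eq using fun n => exists_mul_log_sub_log_eq (hV.pos (n + 1) (by lia))
    (hV.monotoneOn (Set.mem_Ici.2 (by lia)) (Set.mem_Ici.2 (by lia)) (by lia : n + 1 ≤ n + 2))
  have hr_le_one : ∀ n, r n ≤ 1 := fun n =>
    (hr_le n).trans <| (div_le_one (hV.pos _ (by lia))).2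
      (sub_le_self _ (hV.pos _ (by lia)).le)
  have hr_tendsto : Tendsto r atTop (𝓝 0) :=
    squeeze_zero hr_nonneg (fun n => (hr_le n).trans_eq (by rw [Function.comp_apply, dd_add_two]))
      (hV0.comp (tendsto_add_atTop_nat 2))
  let ρ : ℕ →ᵇ ℝ := .ofNormedAddCommGroupDiscrete (fun n => if n < 2 then 1 else r (n - 2)) 1
    fun n => by
      split_ifs
      · exact norm_one.le
      · rw [Real.norm_of_nonneg (hr_nonneg _)]; exact hr_le_one _
  have hρ : ∀ n, ρ (n + 2) = r n := fun n => by simp [ρ]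
  refine ⟨ρ, ?_, rfl, fun n => ?_⟩
  · exact (tendsto_add_atTop_iff_nat 2).1 (hr_tendsto.congr fun n => (hρ n).symm)
  · rw [hρ, dd_add_two, dd_add_two, hr_eq]

variable {Y : Type*} [NormedAddCommGroup Y] [NormedSpace ℝ Y]

lemma exists_avgOp_sub_eq_sub_avgOp (hV : IsWeight V)
    (hV0 : Tendsto (fun n => dd V n / V n) atTop (𝓝 0)) {x : ℕ →ᵇ Y} {L : Y}
    (h : unifAvg (fun n => Real.log (V n)) x L) {ε : ℝ} (hε : 0 < ε) :
    ∃ b z w : ℕ →ᵇ Y, ‖b‖ ≤ ε ∧ Tendsto z atTop (𝓝 0) ∧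
      avgOp hV (x - .const ℕ L - b - z) = w - avgOp hV w := by
  obtain ⟨B, hB⟩ := (Metric.isBounded_range_of_tendsto _ (hV.tendsto_dd_log hV0)).exists_norm_le
  obtain ⟨b, w, hb, hw0, hw⟩ :=
    h.exists_bounded_primitive hV.monotoneOn_log (fun n => hB _ ⟨n, rfl⟩) hε
  obtain ⟨ρ, hρ, hρ1, hρ_log⟩ := hV.exists_log_defect hV0
  set u := x - .const ℕ L - b
  have hnull : Tendsto (ρ • u) atTop (𝓝 0) :=
    hρ.zero_smul_isBoundedUnder_le (isBoundedUnder_of ⟨‖u‖, u.norm_coe_le_norm⟩)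
  refine ⟨b, ρ • u, w, hb, hnull, avgOp_eq_sub_avgOp hV hw0 ?_ fun n => ?_⟩
  · change u 1 - ρ 1 • u 1 = 0
    rw [hρ1, one_smul, sub_self]
  · change _ = dd V (n + 2) • (u (n + 2) - ρ (n + 2) • u (n + 2))
    rw [hw, smul_smul, hρ_log]
    change _ • u (n + 2) = _
    module

end LogarithmicScale

section Conclusion

lemma tendsto_limsup_nhds_zero {ι κ : Type*} {l : Filter ι} {l' : Filter κ} [l'.NeBot]
    {u : ι → κ → ℝ} (h0 : ∀ i j, 0 ≤ u i j) (h : ∀ ε > 0, ∀ᶠ i in l, ∀ᶠ j in l', u i j ≤ ε) :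
    Tendsto (fun i => limsup (u i) l') l (𝓝 0) := by
  rw [Metric.tendsto_nhds]
  intro ε hε
  filter_upwards [h (ε / 2) (half_pos hε)] with i hi
  have nonneg : 0 ≤ limsup (u i) l' :=
    le_limsup_of_frequently_le (Frequently.of_forall (h0 i)) ⟨ε / 2, hi⟩
  have le_half : limsup (u i) l' ≤ ε / 2 :=
    limsup_le_of_le
      (isBoundedUnder_of ⟨0, h0 i⟩ : IsBoundedUnder (· ≥ ·) l' (u i)).isCoboundedUnder_le hi
  rw [Real.dist_0_eq_abs, abs_of_nonneg nonneg]
  linarith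

variable {V : ℕ → ℝ} {Y : Type*} [NormedAddCommGroup Y] [NormedSpace ℝ Y]

lemma eventually_norm_avgOp_pow_apply_le (hV : IsWeight V) (hVtop : Tendsto V atTop atTop)
    {f b z w : ℕ →ᵇ Y} (hz : Tendsto z atTop (𝓝 0))
    (hw : avgOp hV (f - b - z) = w - avgOp hV w) {ε : ℝ} (hε : 0 < ε) (k : ℕ) :
    ∀ᶠ N in atTop, ‖(avgOp hV ^ (k + 1)) f N‖ ≤ ‖b‖ + ε + 2 * ‖w‖ / √(k + 1) := by
  have split : (avgOp hV ^ (k + 1)) f = (avgOp hV ^ (k + 1)) b + (avgOp hV ^ (k + 1)) z +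
      (avgOp hV ^ k) (w - avgOp hV w) := by
    rw [← hw, ← Module.End.mul_apply, ← pow_succ, ← map_add, ← map_add, sub_sub, add_sub_cancel]
  have null_le : ∀ᶠ N in atTop, ‖(avgOp hV ^ (k + 1)) z N‖ < ε :=
    (tendsto_zero_iff_norm_tendsto_zero.1
      (tendsto_avgOp_pow_zero hV hVtop hz (k + 1))).eventually_lt_const hε
  filter_upwards [null_le] with N hN
  rw [split, BoundedContinuousFunction.add_apply, BoundedContinuousFunction.add_apply]
  have contraction := isMidpointContraction_avgOp (Y := Y) hV
  have hb_le : ‖(avgOp hV ^ (k + 1)) b‖ ≤ ‖b‖ := contraction.norm_pow_apply_le (k + 1) b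
  have hw_le : ‖(avgOp hV ^ k) (w - avgOp hV w)‖ ≤ 2 * ‖w‖ / √(k + 1) :=
    contraction.norm_pow_apply_sub_le k w
  refine norm_add_le_of_le (norm_add_le_of_le ?_ hN.le) ?_
  · exact (BoundedContinuousFunction.norm_coe_le_norm _ N).trans hb_le
  · exact (BoundedContinuousFunction.norm_coe_le_norm _ N).trans hw_le

lemma tendsto_const_div_sqrt_natCast_add_one (c : ℝ) :
    Tendsto (fun k : ℕ => c / √((k : ℝ) + 1)) atTop (𝓝 0) :=
  tendsto_const_nhds.div_atTop <| Real.tendsto_sqrt_atTop.comp <|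
    tendsto_atTop_add_const_right _ _ tendsto_natCast_atTop_atTop

end Conclusion

theorem stmt9_general {Y : Type*} [NormedAddCommGroup Y] [NormedSpace ℝ Y]
    (x : ℕ → Y) (hx : ∃ C : ℝ, ∀ n, ‖x n‖ ≤ C) (L : Y)
    (V : ℕ → ℝ)
    (hVpos : ∀ n : ℕ, 1 ≤ n → 0 < V n)
    (hVmono : MonotoneOn V (Set.Ici 1))
    (hVtop : Tendsto V atTop atTop)
    (hV0 : Tendsto (fun N : ℕ => dd V N / V N) atTop (𝓝 0))
    (h : unifAvg (fun j => Real.log (V j)) x L) :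
    iterInfty V x L := by
  obtain ⟨C, hC⟩ := hx
  have hV : IsWeight V := ⟨hVpos, hVmono⟩
  let x' : ℕ →ᵇ Y := .ofNormedAddCommGroupDiscrete x C hC
  refine tendsto_limsup_nhds_zero (fun _ _ => norm_nonneg _) fun ε hε => ?_
  obtain ⟨b, z, w, hb, hz, hw⟩ :=
    exists_avgOp_sub_eq_sub_avgOp (x := x') hV hV0 h (by positivity : 0 < ε / 3)
  filter_upwards [(tendsto_const_div_sqrt_natCast_add_one (2 * ‖w‖)).eventually_lt_const
    (by positivity : 0 < ε / 3)] with k hk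
  filter_upwards [eventually_norm_avgOp_pow_apply_le hV hVtop hz hw (by positivity : 0 < ε / 3) k]
    with N hN
  rw [coe_avgOp_pow] at hN
  exact hN.trans (by linarith)

/-- if `𝔼^{log V}_unif x_n = L` then `𝔼(∞)^V x_n = L`. -/
theorem stmt9 {Y : Type*} [NormedAddCommGroup Y] [NormedSpace ℝ Y] [CompleteSpace Y]
    (x : ℕ → Y) (hx : ∃ C : ℝ, ∀ n, ‖x n‖ ≤ C) (L : Y)
    (V : ℕ → ℝ)
    (hVpos : ∀ n : ℕ, 1 ≤ n → 0 < V n)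
    (hVmono : ∀ m n : ℕ, 1 ≤ m → m < n → V m < V n)
    (hVtop : Tendsto V atTop atTop)
    (hV0 : Tendsto (fun N : ℕ => dd V N / V N) atTop (nhds 0))
    (h : unifAvg (fun j => Real.log (V j)) x L) :
    iterInfty V x L :=
  stmt9_general x hx L V hVpos
    (StrictMonoOn.monotoneOn fun m hm n _ hmn => hVmono m n hm hmn) hVtop hV0 h
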